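/- Zeroing a column strictly decreases the Perron–Frobenius eigenvalue: Let n ≥ 1 and let K be an n×n real matrix with nonnegative entries that is irreducible (for every pair (i,j) there exists p ≥ 1 with (K^p)_{ij} > 0). Let K' be the matrix obtained from K by replacing its first column by the zero column. Then the spectral radius of K' is strictly smaller than the spectral radius of K. -/

import Mathlib

/-!
The proof is a Collatz–Wielandt argument. A nonnegative matrix `A` admits a nonzero `v ≥ 0` with
`ρ(A) v ≤ A v`, namely the entrywise modulus of an eigenvector for an eigenvalue of maximal modulus
(`exists_subinvariant`). Conversely, by Gelfand's formula, any nonzero `v ≥ 0` with `r v ≤ A v`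
gives `r ≤ ρ(A)` (`ofReal_le_spectralRadius`).

Take such a `v` for `K'` and `r = ρ(K')`; then `r v ≤ K' v ≤ K v`. Irreducibility provides a
polynomial `S = 1 + K + ⋯ + K ^ N` in `K` with all entries positive (`exists_sum_pow_pos`).
If `K v ≠ r v`, then `w = S v` satisfies `K w - r w = S (K v - r v) > 0` entrywise, so
`(r + ε) w ≤ K w` for some `ε > 0`, and `r < ρ(K)`. If `K v = r v`, then `S v` is a multiple
of `v`, so `v` is entrywise positive, and `K v ≤ K' v` forces the first column of `K` to vanish,
contradicting irreducibility.
-/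

section PerronFrobenius

open Matrix Filter Topology

variable {ι : Type*} [Fintype ι]

lemma mulVec_mono_of_nonneg (A : Matrix ι ι ℝ) (hA : ∀ i j, 0 ≤ A i j) {u v : ι → ℝ}
    (huv : ∀ i, u i ≤ v i) (i : ι) : (A *ᵥ u) i ≤ (A *ᵥ v) i :=
  Finset.sum_le_sum fun j _ => mul_le_mul_of_nonneg_left (huv j) (hA i j)

lemma mulVec_pos_of_pos (S : Matrix ι ι ℝ) (hS : ∀ i j, 0 < S i j) {v : ι → ℝ}
    (hv : ∀ i, 0 ≤ v i) (hv0 : v ≠ 0) (i : ι) : 0 < (S *ᵥ v) i := by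
  obtain ⟨k, hk⟩ := Function.ne_iff.mp hv0
  exact Finset.sum_pos' (fun j _ => mul_nonneg (hS i j).le (hv j))
    ⟨k, Finset.mem_univ k, mul_pos (hS i k) (lt_of_le_of_ne (hv k) (Ne.symm hk))⟩

variable [DecidableEq ι]

-- Gelfand's formula needs a Banach algebra norm; the spectral radius does not depend on its choice.
attribute [local instance] Matrix.linftyOpNormedRing Matrix.linftyOpNormedAlgebra

/-- The spectral radius of a nonnegative matrix has a nonnegative subinvariant vector: take moduli
in the eigenvector equation for an eigenvalue of maximal modulus. -/
lemma exists_subinvariant [Nonempty ι] (A : Matrix ι ι ℝ) (hA : ∀ i j, 0 ≤ A i j) :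
    ∃ r : ℝ, 0 ≤ r ∧ spectralRadius ℂ (A.map Complex.ofReal) = ENNReal.ofReal r ∧
      ∃ v : ι → ℝ, (∀ i, 0 ≤ v i) ∧ v ≠ 0 ∧ ∀ i, r * v i ≤ (A *ᵥ v) i := by
  obtain ⟨z, hz, hzr⟩ := spectrum.exists_nnnorm_eq_spectralRadius (A.map Complex.ofReal)
  refine ⟨‖z‖, norm_nonneg z, ?_, ?_⟩
  · rw [← hzr, ofReal_norm, enorm_eq_nnnorm]
  rw [spectrum.mem_iff, Matrix.isUnit_iff_isUnit_det, isUnit_iff_ne_zero, not_not] at hz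
  obtain ⟨x, hx0, hx⟩ := Matrix.exists_mulVec_eq_zero_iff.mpr hz
  refine ⟨fun i => ‖x i‖, fun i => norm_nonneg _, ?_, fun i => ?_⟩
  · intro h
    exact hx0 (funext fun i => norm_eq_zero.mp (congrFun h i))
  · have hi : z * x i = ∑ j, (A i j : ℂ) * x j := by
      have h := congrFun hx i
      rw [Matrix.sub_mulVec, Algebra.algebraMap_eq_smul_one, Matrix.smul_mulVec,
        Matrix.one_mulVec] at h
      simpa [Matrix.mulVec, dotProduct, sub_eq_zero] using h
    calc ‖z‖ * ‖x i‖ = ‖∑ j, (A i j : ℂ) * x j‖ := by rw [← norm_mul, hi]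
      _ ≤ ∑ j, ‖(A i j : ℂ) * x j‖ := norm_sum_le _ _
      _ = (A *ᵥ fun i => ‖x i‖) i := by
        simp [Matrix.mulVec, dotProduct, abs_of_nonneg (hA i _)]

/-- The Collatz–Wielandt lower bound: iterating `r v ≤ A v` gives `r ^ m ≤ ‖A ^ m‖` for all `m`,
and Gelfand's formula applies. -/
lemma ofReal_le_spectralRadius [Nonempty ι] (A : Matrix ι ι ℝ) (hA : ∀ i j, 0 ≤ A i j)
    {r : ℝ} (hr : 0 ≤ r) {v : ι → ℝ} (hv : ∀ i, 0 ≤ v i) (hv0 : v ≠ 0)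
    (h : ∀ i, r * v i ≤ (A *ᵥ v) i) :
    ENNReal.ofReal r ≤ spectralRadius ℂ (A.map Complex.ofReal) := by
  have hpow : ∀ m : ℕ, ∀ i, r ^ m * v i ≤ ((A ^ m) *ᵥ v) i := by
    intro m
    induction m with
    | zero => simp
    | succ m ih =>
      intro i
      have h1 := mulVec_mono_of_nonneg A hA ih i
      have h2 : (A *ᵥ fun i => r ^ m * v i) i = r ^ m * (A *ᵥ v) i :=
        congrFun (Matrix.mulVec_smul A (r ^ m) v) i
      rw [h2, Matrix.mulVec_mulVec, ← pow_succ'] at h1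
      calc r ^ (m + 1) * v i = r ^ m * (r * v i) := by ring
        _ ≤ r ^ m * (A *ᵥ v) i := mul_le_mul_of_nonneg_left (h i) (pow_nonneg hr m)
        _ ≤ _ := h1
  obtain ⟨i, hi⟩ := Function.ne_iff.mp hv0
  have hvn : 0 < ‖v‖ := norm_pos_iff.mpr hv0
  have hnorm : ∀ m : ℕ, r ^ m ≤ ‖(A.map Complex.ofReal) ^ m‖ := by
    intro m
    have hmap : (A.map Complex.ofReal) ^ m = (A ^ m).map Complex.ofReal :=
      (map_pow (Complex.ofRealHom.mapMatrix (m := ι)) A m).symm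
    have hreal : ‖(A ^ m).map Complex.ofReal‖ = ‖A ^ m‖ := by
      simp [Matrix.linfty_opNorm_def]
    rw [hmap, hreal]
    have h1 : r ^ m * ‖v‖ ≤ ‖(A ^ m) *ᵥ v‖ := by
      have h2 : ‖r ^ m • v‖ ≤ ‖(A ^ m) *ᵥ v‖ := by
        refine (pi_norm_le_iff_of_nonneg (norm_nonneg _)).mpr fun j => ?_
        rw [Pi.smul_apply, smul_eq_mul, Real.norm_of_nonneg (mul_nonneg (pow_nonneg hr m) (hv j))]
        exact (hpow m j).trans ((le_abs_self _).trans (norm_le_pi_norm ((A ^ m) *ᵥ v) j))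
      rwa [norm_smul, Real.norm_of_nonneg (pow_nonneg hr m)] at h2
    exact le_of_mul_le_mul_right (h1.trans (Matrix.linfty_opNorm_mulVec _ _)) hvn
  refine ge_of_tendsto
    (spectrum.pow_nnnorm_pow_one_div_tendsto_nhds_spectralRadius (A.map Complex.ofReal)) ?_
  filter_upwards [eventually_gt_atTop 0] with m hm
  have hm' : (m : ℝ) ≠ 0 := by positivity
  calc ENNReal.ofReal r = (ENNReal.ofReal r ^ m) ^ (1 / m : ℝ) := by
        rw [← ENNReal.rpow_natCast, ← ENNReal.rpow_mul, mul_one_div_cancel hm', ENNReal.rpow_one]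
    _ ≤ _ := by
        refine ENNReal.rpow_le_rpow ?_ (by positivity)
        rw [← ENNReal.ofReal_pow hr, ← enorm_eq_nnnorm, ← ofReal_norm]
        exact ENNReal.ofReal_le_ofReal (hnorm m)

lemma exists_sum_pow_pos (K : Matrix ι ι ℝ) (hK : ∀ i j, 0 ≤ K i j)
    (hirr : ∀ i j, ∃ p : ℕ, 1 ≤ p ∧ 0 < (K ^ p) i j) :
    ∃ N : ℕ, ∀ i j, 0 < (∑ p ∈ Finset.range N, K ^ p) i j := by
  have hpow : ∀ (m : ℕ) i j, 0 ≤ (K ^ m) i j := by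
    intro m
    induction m with
    | zero => intro i j; by_cases h : i = j <;> simp [h]
    | succ m ih =>
      intro i j
      rw [pow_succ, Matrix.mul_apply]
      exact Finset.sum_nonneg fun k _ => mul_nonneg (ih i k) (hK k j)
  choose p _ hp using hirr
  refine ⟨(Finset.univ.sup fun x : ι × ι => p x.1 x.2) + 1, fun i j => ?_⟩
  rw [Matrix.sum_apply]
  refine Finset.sum_pos' (fun q _ => hpow q i j) ⟨p i j, ?_, hp i j⟩
  rw [Finset.mem_range, Nat.lt_succ_iff]
  exact Finset.le_sup (f := fun x : ι × ι => p x.1 x.2) (Finset.mem_univ (i, j))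

/-- For irreducible `K`, a subinvariant vector that is not an eigenvector shows that `r` is not
optimal: applying a positive polynomial in `K` makes the inequality strict in every coordinate. -/
lemma ofReal_lt_spectralRadius [Nonempty ι] (K : Matrix ι ι ℝ) (hK : ∀ i j, 0 ≤ K i j)
    (hirr : ∀ i j, ∃ p : ℕ, 1 ≤ p ∧ 0 < (K ^ p) i j)
    {r : ℝ} (hr : 0 ≤ r) {v : ι → ℝ} (hv : ∀ i, 0 ≤ v i) (hv0 : v ≠ 0)
    (h : ∀ i, r * v i ≤ (K *ᵥ v) i) (hne : K *ᵥ v ≠ r • v) :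
    ENNReal.ofReal r < spectralRadius ℂ (K.map Complex.ofReal) := by
  obtain ⟨N, hS⟩ := exists_sum_pow_pos K hK hirr
  set S := ∑ p ∈ Finset.range N, K ^ p with hSdef
  have hcomm : K * S = S * K := by
    rw [hSdef, Finset.mul_sum, Finset.sum_mul]
    exact Finset.sum_congr rfl fun p _ => by rw [← pow_succ', ← pow_succ]
  set w := S *ᵥ v with hw
  have hwpos : ∀ i, 0 < w i := mulVec_pos_of_pos S hS hv hv0
  have hdiff : ∀ i, 0 < (K *ᵥ w) i - r * w i := by
    intro i
    have h1 := mulVec_pos_of_pos S hS (v := K *ᵥ v - r • v)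
      (fun j => by simpa using h j) (sub_ne_zero.mpr hne) i
    rw [Matrix.mulVec_sub, Matrix.mulVec_smul, Matrix.mulVec_mulVec, ← hcomm,
      ← Matrix.mulVec_mulVec] at h1
    exact h1
  obtain ⟨k, hk⟩ := Finite.exists_min fun i => ((K *ᵥ w) i - r * w i) / w i
  set ε := ((K *ᵥ w) k - r * w k) / w k with hε
  have hεpos : 0 < ε := div_pos (hdiff k) (hwpos k)
  calc ENNReal.ofReal r < ENNReal.ofReal (r + ε) :=
        (ENNReal.ofReal_lt_ofReal_iff (by linarith)).mpr (by linarith)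
    _ ≤ _ := by
        refine ofReal_le_spectralRadius K hK (by linarith) (fun i => (hwpos i).le) ?_ fun i => ?_
        · intro h0
          exact (hwpos k).ne' (congrFun h0 k)
        · have := (le_div_iff₀ (hwpos i)).mp (hk i)
          linarith

/-- A nonnegative eigenvector of an irreducible nonnegative matrix is entrywise positive. -/
lemma pos_of_mulVec_eq_smul (K : Matrix ι ι ℝ) (hK : ∀ i j, 0 ≤ K i j)
    (hirr : ∀ i j, ∃ p : ℕ, 1 ≤ p ∧ 0 < (K ^ p) i j)
    {r : ℝ} {v : ι → ℝ} (hv : ∀ i, 0 ≤ v i) (hv0 : v ≠ 0)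
    (h : K *ᵥ v = r • v) (i : ι) : 0 < v i := by
  obtain ⟨N, hS⟩ := exists_sum_pow_pos K hK hirr
  have hpow : ∀ m : ℕ, (K ^ m) *ᵥ v = r ^ m • v := by
    intro m
    induction m with
    | zero => simp
    | succ m ih =>
      rw [pow_succ, ← Matrix.mulVec_mulVec, h, Matrix.mulVec_smul, ih, smul_smul, pow_succ']
  have h1 := mulVec_pos_of_pos _ hS hv hv0 i
  rw [Matrix.sum_mulVec, Finset.sum_congr rfl fun m _ => hpow m, ← Finset.sum_smul] at h1
  refine lt_of_le_of_ne (hv i) fun h0 => ?_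
  simp [← h0] at h1

end PerronFrobenius

/-- **Zeroing a column strictly decreases the Perron–Frobenius eigenvalue.** For an
irreducible nonnegative real `n × n` matrix `K` (`n ≥ 1`), the matrix `K'` obtained from
`K` by replacing its first column by the zero column has strictly smaller spectral
radius than `K`. -/
theorem spectralRadius_lt_of_zero_column (n : ℕ) (hn : 1 ≤ n)
    (K : Matrix (Fin n) (Fin n) ℝ)
    (hnonneg : ∀ i j, 0 ≤ K i j)
    (hirr : ∀ i j, ∃ p : ℕ, 1 ≤ p ∧ 0 < (K ^ p) i j) :
    spectralRadius ℂ
        ((Matrix.of fun i j : Fin n => if j.val = 0 then 0 else K i j).map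
          (Complex.ofReal))
      < spectralRadius ℂ (K.map (Complex.ofReal)) := by
  have : Nonempty (Fin n) := ⟨⟨0, hn⟩⟩
  set K' : Matrix (Fin n) (Fin n) ℝ :=
    Matrix.of fun i j : Fin n => if j.val = 0 then 0 else K i j with hK'
  have hK'0 : ∀ i j, 0 ≤ K' i j := by
    intro i j
    simp only [hK', Matrix.of_apply]
    split_ifs
    exacts [le_rfl, hnonneg i j]
  have hle : ∀ i j, K' i j ≤ K i j := by
    intro i j
    simp only [hK', Matrix.of_apply]
    split_ifs
    exacts [hnonneg i j, le_rfl]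
  obtain ⟨r, hr, hρ, v, hv, hv0, hsub⟩ := exists_subinvariant K' hK'0
  have hterm : ∀ i j, K' i j * v j ≤ K i j * v j := fun i j =>
    mul_le_mul_of_nonneg_right (hle i j) (hv j)
  have hmono : ∀ i, K'.mulVec v i ≤ K.mulVec v i := by
    intro i
    change ∑ j, K' i j * v j ≤ ∑ j, K i j * v j
    exact Finset.sum_le_sum fun j _ => hterm i j
  rw [hρ]
  refine ofReal_lt_spectralRadius K hnonneg hirr hr hv hv0
    (fun i => (hsub i).trans (hmono i)) fun heq => ?_
  have hvpos := pos_of_mulVec_eq_smul K hnonneg hirr hv hv0 heq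
  have hcol : ∀ i, K i ⟨0, hn⟩ = 0 := by
    intro i
    have h1 : ∑ j, K i j * v j ≤ ∑ j, K' i j * v j := by
      have h2 : ∑ j, K i j * v j = r * v i := congrFun heq i
      rw [h2]
      exact hsub i
    -- A sum of termwise inequalities that is an equality is a termwise equality.
    have h3 := (Finset.sum_eq_sum_iff_of_le fun j _ => hterm i j).mp
      (le_antisymm (Finset.sum_le_sum fun j _ => hterm i j) h1) ⟨0, hn⟩ (Finset.mem_univ _)
    simpa [hK', (hvpos _).ne'] using h3
  obtain ⟨p, hp1, hp⟩ := hirr ⟨0, hn⟩ ⟨0, hn⟩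
  obtain ⟨q, rfl⟩ := Nat.exists_eq_add_of_le' hp1
  rw [pow_succ, Matrix.mul_apply] at hp
  simp [hcol] at hp
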